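/- Let ψ₁,…,ψ_M : ℝ → ℝ be continuous and linearly independent on [0,2π] and h₀ > 0. Suppose the weights are constants W_e, W_u, W_{Δu} ≥ 0 with W_e > 0 or W_u > 0, and set σ = h₀²W_e + W_u + W_{Δu}. Then M_ψ = σ G(1) is invertible, the learning matrices reduce to scalars Q_ψ = ((h₀²W_e + W_{Δu})/σ) I and L_ψ = (h₀ W_e/σ) I, and the iteration θ_{j+1} = Q_ψ θ_j + L_ψ (c − h₀ θ_j) with fixed point θ* satisfies ‖θ_{j+1} − θ*‖₂ = γ ‖θ_j − θ*‖₂ for all j, where γ = W_{Δu}/σ ∈ [0,1). In particular the sequence (θ_j) converges monotonically in the Euclidean 2-norm to θ*. -/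

import Mathlib

/-!
A constant weight only rescales the Gram matrix, so `Q_ψ` and `L_ψ` are multiples of the identity
as soon as `M_ψ` is invertible. The latter holds because the quadratic form of a Gram matrix is the
integral of `w (∑ x_k ψ_k)²`, which is positive for `x ≠ 0` by continuity and linear independence.
The error to a fixed point is propagated by `Q_ψ - h₀ L_ψ`, and here the contributions `h₀² W_e`
cancel, leaving the scalar `W_{Δu} / σ`.
-/

open Matrix Finset Filter intervalIntegral

/-- The weighted Gram matrix of the basis functions `ψ` with weight `w`:
`(gram M ψ w) k l = ∫₀^{2π} w(α) ψ_k(α) ψ_l(α) dα`. -/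
noncomputable def gram (M : ℕ) (ψ : Fin M → ℝ → ℝ) (w : ℝ → ℝ) :
    Matrix (Fin M) (Fin M) ℝ :=
  Matrix.of fun k l => ∫ α in (0:ℝ)..(2 * Real.pi), w α * ψ k α * ψ l α

theorem gram_const_mul {M : ℕ} (ψ : Fin M → ℝ → ℝ) (a : ℝ) (w : ℝ → ℝ) :
    gram M ψ (fun α => a * w α) = a • gram M ψ w := by
  ext k l
  simp only [_root_.gram, of_apply, Matrix.smul_apply, smul_eq_mul, mul_assoc, integral_const_mul]

theorem dotProduct_gram_mulVec {M : ℕ} {ψ : Fin M → ℝ → ℝ} {w : ℝ → ℝ}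
    (hint : ∀ k l, IntervalIntegrable (fun α => w α * ψ k α * ψ l α) MeasureTheory.volume
      0 (2 * Real.pi)) (x y : Fin M → ℝ) :
    x ⬝ᵥ gram M ψ w *ᵥ y =
      ∫ α in (0:ℝ)..(2 * Real.pi), w α * (∑ k, x k * ψ k α) * ∑ l, y l * ψ l α := by
  have hterm (k l : Fin M) : IntervalIntegrable
      (fun α => x k * y l * (w α * ψ k α * ψ l α)) MeasureTheory.volume 0 (2 * Real.pi) :=
    (hint k l).const_mul _
  have hrow (k : Fin M) : IntervalIntegrable
      (fun α => ∑ l, x k * y l * (w α * ψ k α * ψ l α)) MeasureTheory.volume 0 (2 * Real.pi) := by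
    simpa only [sum_fn] using IntervalIntegrable.sum univ fun l _ => hterm k l
  calc x ⬝ᵥ gram M ψ w *ᵥ y
      = ∑ k, ∑ l, ∫ α in (0:ℝ)..(2 * Real.pi), x k * y l * (w α * ψ k α * ψ l α) := by
        simp only [dotProduct, mulVec, _root_.gram, of_apply, integral_const_mul, mul_sum]
        exact sum_congr rfl fun k _ => sum_congr rfl fun l _ => by ring
    _ = ∫ α in (0:ℝ)..(2 * Real.pi), ∑ k, ∑ l, x k * y l * (w α * ψ k α * ψ l α) := by
        rw [integral_finsetSum fun k _ => hrow k]
        exact sum_congr rfl fun k _ => (integral_finsetSum fun l _ => hterm k l).symm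
    _ = ∫ α in (0:ℝ)..(2 * Real.pi), w α * (∑ k, x k * ψ k α) * ∑ l, y l * ψ l α := by
        refine integral_congr fun α _ => ?_
        simp only [mul_assoc (w α) (∑ _, _), sum_mul_sum]
        simp only [mul_sum]
        exact sum_congr rfl fun k _ => sum_congr rfl fun l _ => by ring

theorem linearIndependent_domRestrict_iff {ι X R : Type*} [Fintype ι] [Ring R] {f : ι → X → R}
    {s : Set X} :
    LinearIndependent R (fun i => s.domRestrict (f i)) ↔
      ∀ x : ι → R, (∀ a ∈ s, ∑ i, x i * f i a = 0) → x = 0 := by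
  simp [Fintype.linearIndependent_iff, funext_iff]

theorem gram_posDef {M : ℕ} {ψ : Fin M → ℝ → ℝ} {w : ℝ → ℝ}
    (hψ : ∀ k, ContinuousOn (ψ k) (Set.Icc 0 (2 * Real.pi)))
    (hli : LinearIndependent ℝ fun k => (Set.Icc 0 (2 * Real.pi)).domRestrict (ψ k))
    (hw : ContinuousOn w (Set.Icc 0 (2 * Real.pi)))
    (hw_pos : ∀ α ∈ Set.Icc 0 (2 * Real.pi), 0 < w α) :
    (gram M ψ w).PosDef := by
  have hint (k l : Fin M) : IntervalIntegrable (fun α => w α * ψ k α * ψ l α)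
      MeasureTheory.volume 0 (2 * Real.pi) :=
    ((hw.mul (hψ k)).mul (hψ l)).intervalIntegrable_of_Icc Real.two_pi_pos.le
  refine .of_dotProduct_mulVec_pos ?_ fun x hx => ?_
  · ext k l
    simp only [_root_.gram, conjTranspose_apply, of_apply, star_trivial, mul_right_comm]
  · obtain ⟨α, hα, hne⟩ : ∃ α ∈ Set.Icc 0 (2 * Real.pi), ∑ k, x k * ψ k α ≠ 0 := by
      by_contra! hzero
      exact hx (linearIndependent_domRestrict_iff.mp hli x hzero)
    rw [star_trivial, dotProduct_gram_mulVec hint]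
    simp only [mul_assoc (w _), ← sq]
    refine integral_pos Real.two_pi_pos (by fun_prop) (fun β hβ => ?_) ⟨α, hα, ?_⟩
    · exact mul_nonneg (hw_pos β (Set.Ioc_subset_Icc_self hβ)).le (sq_nonneg _)
    · exact mul_pos (hw_pos α hα) (sq_pos_of_ne_zero hne)

theorem inv_gram_mul_gram_const {M : ℕ} {ψ : Fin M → ℝ → ℝ} {s : ℝ} (hs : s ≠ 0)
    (hunit : IsUnit (gram M ψ fun _ => s)) (t : ℝ) :
    (gram M ψ fun _ => s)⁻¹ * gram M ψ (fun _ => t) =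
      (t / s) • (1 : Matrix (Fin M) (Fin M) ℝ) := by
  have hratio : gram M ψ (fun _ => t) = (t / s) • gram M ψ (fun _ => s) := by
    rw [← gram_const_mul, div_mul_cancel₀ t hs]
  rw [hratio, Matrix.mul_smul, nonsing_inv_mul _ ((isUnit_iff_isUnit_det _).mp hunit)]

/-- One step of iterative learning control: the right-hand side of
`θ_{j+1} = Q θ_j + L (c - h θ_j)` at `θ_j = x`. -/
def learningUpdate {m n R : Type*} [Fintype n] [Ring R] (Q L : Matrix m n R) (c : n → R) (h : R)
    (x : n → R) : m → R :=
  Q *ᵥ x + L *ᵥ (c - h • x)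

theorem learningUpdate_sub_learningUpdate {m n R : Type*} [Fintype n] [CommRing R]
    (Q L : Matrix m n R) (c : n → R) (h : R) (x y : n → R) :
    learningUpdate Q L c h x - learningUpdate Q L c h y = (Q - h • L) *ᵥ (x - y) := by
  simp only [learningUpdate, mulVec_sub, sub_mulVec, mulVec_smul, smul_mulVec]
  abel

theorem sqrt_sum_mul_sq {ι : Type*} [Fintype ι] (a : ℝ) (v : ι → ℝ) :
    √(∑ i, (a * v i) ^ 2) = |a| * √(∑ i, v i ^ 2) := by
  simp only [mul_pow, ← mul_sum, Real.sqrt_mul (sq_nonneg a), Real.sqrt_sq_eq_abs]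

theorem sub_eq_pow_smul_of_succ_sub_eq_smul {R E : Type*} [Monoid R] [AddGroup E] [MulAction R E]
    {r : R} {u : ℕ → E} {x : E} (hstep : ∀ j, u (j + 1) - x = r • (u j - x)) (j : ℕ) :
    u j - x = r ^ j • (u 0 - x) := by
  induction j with
  | zero => rw [pow_zero, one_smul]
  | succ j ih => rw [hstep, ih, smul_smul, pow_succ']

theorem tendsto_of_succ_sub_eq_smul {R E : Type*} [SeminormedRing R] [AddCommGroup E] [Module R E]
    [TopologicalSpace E] [ContinuousAdd E] [ContinuousSMul R E] {r : R} {u : ℕ → E} {x : E}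
    (hr : ‖r‖ < 1) (hstep : ∀ j, u (j + 1) - x = r • (u j - x)) :
    Tendsto u atTop (nhds x) := by
  have hclosed (j : ℕ) : u j = r ^ j • (u 0 - x) + x :=
    sub_eq_iff_eq_add.mp (sub_eq_pow_smul_of_succ_sub_eq_smul hstep j)
  simpa only [← hclosed, zero_smul, zero_add] using
    ((tendsto_pow_atTop_nhds_zero_of_norm_lt_one hr).smul_const (u 0 - x)).add_const x

/-- **Constant-weight case of Theorem 3 of the paper.** With scalar weights the
learning matrices reduce to scalar multiples of the identity, and the iteration
contracts the Euclidean distance to the fixed point by the exact factor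
`γ = W_{Δu}/σ ∈ [0,1)`; in particular the iterates converge monotonically in the
Euclidean 2-norm to `θ*`. -/
theorem ilc_constant_weights (M : ℕ) (ψ : Fin M → ℝ → ℝ)
    (hcont : ∀ k, Continuous (ψ k))
    (hli : ∀ x : Fin M → ℝ,
      (∀ α ∈ Set.Icc (0:ℝ) (2 * Real.pi), ∑ k, x k * ψ k α = 0) → x = 0)
    (h₀ : ℝ) (hh₀ : 0 < h₀)
    (We Wu WΔu : ℝ)
    (hWe : 0 ≤ We) (hWu : 0 ≤ Wu) (hWΔ : 0 ≤ WΔu)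
    (hposw : 0 < We ∨ 0 < Wu)
    (σ : ℝ) (hσ : σ = h₀ ^ 2 * We + Wu + WΔu)
    (Mψ Qψ Lψ : Matrix (Fin M) (Fin M) ℝ)
    (hMψ : Mψ = gram M ψ (fun _ => σ))
    (hQψ : Qψ = Mψ⁻¹ * gram M ψ (fun _ => h₀ ^ 2 * We + WΔu))
    (hLψ : Lψ = Mψ⁻¹ * gram M ψ (fun _ => h₀ * We))
    (c : Fin M → ℝ)
    (γ : ℝ) (hγ : γ = WΔu / σ)
    (θstar : Fin M → ℝ)
    (hfix : θstar = Qψ *ᵥ θstar + Lψ *ᵥ (c - h₀ • θstar))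
    (θ : ℕ → Fin M → ℝ)
    (hθ : ∀ j, θ (j + 1) = Qψ *ᵥ θ j + Lψ *ᵥ (c - h₀ • θ j)) :
    Mψ = σ • gram M ψ (fun _ => 1) ∧ IsUnit Mψ ∧
    Qψ = ((h₀ ^ 2 * We + WΔu) / σ) • (1 : Matrix (Fin M) (Fin M) ℝ) ∧
    Lψ = (h₀ * We / σ) • (1 : Matrix (Fin M) (Fin M) ℝ) ∧
    0 ≤ γ ∧ γ < 1 ∧
    (∀ j : ℕ,
      Real.sqrt (∑ k, (θ (j + 1) k - θstar k) ^ 2) =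
        γ * Real.sqrt (∑ k, (θ j k - θstar k) ^ 2)) ∧
    Tendsto θ atTop (nhds θstar) := by
  have hpos : 0 < h₀ ^ 2 * We + Wu := by
    rcases hposw with h | h <;> positivity
  have hσpos : 0 < σ := by linarith
  have hM_unit : IsUnit (gram M ψ fun _ => σ) :=
    (gram_posDef (fun k => (hcont k).continuousOn) (linearIndependent_domRestrict_iff.mpr hli)
      continuousOn_const fun _ _ => hσpos).isUnit
  subst hMψ
  rw [inv_gram_mul_gram_const hσpos.ne' hM_unit] at hQψ hLψ
  have hγ_nonneg : 0 ≤ γ := hγ ▸ div_nonneg hWΔ hσpos.le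
  have hγ_lt : γ < 1 := by rw [hγ, div_lt_one hσpos]; linarith
  have herror_matrix : Qψ - h₀ • Lψ = γ • (1 : Matrix (Fin M) (Fin M) ℝ) := by
    rw [hQψ, hLψ, smul_smul, ← sub_smul, hγ]
    congr 1
    ring
  have hstep (j : ℕ) : θ (j + 1) - θstar = γ • (θ j - θstar) := by
    have herror := learningUpdate_sub_learningUpdate Qψ Lψ c h₀ (θ j) θstar
    rwa [learningUpdate, learningUpdate, ← hθ, ← hfix, herror_matrix, smul_mulVec,
      one_mulVec] at herror
  refine ⟨?_, hM_unit, hQψ, hLψ, hγ_nonneg, hγ_lt, fun j => ?_, ?_⟩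
  · simpa only [mul_one] using gram_const_mul ψ σ fun _ => 1
  · simpa only [← Pi.sub_apply, hstep, Pi.smul_apply, smul_eq_mul, abs_of_nonneg hγ_nonneg]
      using sqrt_sum_mul_sq γ (θ j - θstar)
  · exact tendsto_of_succ_sub_eq_smul (by rwa [Real.norm_of_nonneg hγ_nonneg]) hstep
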